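/- Let $a$ be a real number that is not a nonpositive integer. Define $\psi_0(z) = 1$ and $\psi_j(z) = e^z E_{a,j}(-z)$ for integers $j \geq 1$. Then for every integer $j \geq 1$ and every $z \in \mathbb{C} \setminus \{0\}$, one has $\psi_j'(z) = \left(1 - \frac{a}{z}\right)\psi_j(z) + \frac{1}{z}\psi_{j-1}(z)$. In particular, for $j = 1$: $\psi_1'(z) = \frac{1 + (z-a)\psi_1(z)}{z}$. -/

import Mathlib

/-!
The operator `θ = w d/dw` multiplies the `n`-th Taylor term by `n = (n + a) - a`, so termwise
differentiation of the series gives `w E_{a,j+1}'(w) = E_{a,j}(w) - a E_{a,j+1}(w)`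
(`hasDerivAt_Efun`), where `E_{a,0} = exp`. Termwise differentiation is justified by locally uniform
convergence, the terms being dominated on a disc of radius `r` by a series which is eventually at
most `r ^ n / n!` (`summable_Efun_bound`). Since `e^z E_{a,0}(-z) = 1`, the formula
`ψ_j(z) = e^z E_{a,j}(-z)` also holds for `j = 0`, and the product rule gives the recurrence.
-/


/-- The entire function `E_{a,j}(z) = ∑_{n≥0} z^n / (n! (n+a)^j)`. -/
noncomputable def Efun (a : ℂ) (j : ℕ) (z : ℂ) : ℂ :=
  ∑' n : ℕ, z ^ n / (n.factorial * ((n : ℂ) + a) ^ j)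

/-- `ψ_0(z) = 1` and `ψ_j(z) = e^z E_{a,j}(-z)` for `j ≥ 1`. -/
noncomputable def psi (a : ℝ) : ℕ → ℂ → ℂ
  | 0 => fun _ => 1
  | (j + 1) => fun z => Complex.exp z * Efun (a : ℂ) (j + 1) (-z)

theorem summable_Efun_bound (a : ℝ) (j : ℕ) (r : ℝ) (hr : 0 ≤ r) :
    Summable fun n : ℕ => r ^ n / (n.factorial * ‖(n : ℂ) + a‖ ^ j) := by
  refine Summable.of_norm_bounded_eventually_nat (Real.summable_pow_div_factorial r) ?_
  filter_upwards [Filter.eventually_ge_atTop ⌈1 + |a|⌉₊] with n hn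
  have hn' : 1 + |a| ≤ n := (Nat.le_ceil _).trans (by exact_mod_cast hn)
  have h1 : 1 ≤ ‖(n : ℂ) + a‖ := by
    have h : ‖(n : ℂ) + a‖ = |(n : ℝ) + a| := by
      rw [← Real.norm_eq_abs, ← Complex.norm_real]
      push_cast
      rfl
    rw [h]
    exact le_trans (by linarith [neg_abs_le a]) (le_abs_self _)
  have h2 : 1 ≤ ‖(n : ℂ) + a‖ ^ j := one_le_pow₀ h1
  have h3 : (0 : ℝ) < n.factorial := by exact_mod_cast n.factorial_pos
  rw [Real.norm_of_nonneg (by positivity)]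
  exact div_le_div_of_nonneg_left (by positivity) h3 (le_mul_of_one_le_right h3.le h2)

theorem norm_Efun_term (a : ℝ) (j n : ℕ) (w : ℂ) :
    ‖w ^ n / (n.factorial * ((n : ℂ) + a) ^ j)‖ =
      ‖w‖ ^ n / (n.factorial * ‖(n : ℂ) + a‖ ^ j) := by
  simp

theorem hasSum_Efun (a : ℝ) (j : ℕ) (w : ℂ) :
    HasSum (fun n : ℕ => w ^ n / (n.factorial * ((n : ℂ) + a) ^ j)) (Efun a j w) := by
  refine (Summable.of_norm ?_).hasSum
  simp only [norm_Efun_term]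
  exact summable_Efun_bound a j _ (norm_nonneg w)

/-- The differential equation `w E_{a,j+1}'(w) = E_{a,j}(w) - a E_{a,j+1}(w)`. -/
theorem hasDerivAt_Efun (a : ℝ) (ha : ∀ n : ℕ, (n : ℂ) + a ≠ 0) (j : ℕ) (w : ℂ) (hw : w ≠ 0) :
    HasDerivAt (Efun a (j + 1)) ((Efun a j w - a * Efun a (j + 1) w) / w) w := by
  have hu := summable_Efun_bound a (j + 1) (‖w‖ + 1) (by positivity)
  have hd : ∀ n : ℕ, DifferentiableOn ℂ
      (fun w : ℂ => w ^ n / (n.factorial * ((n : ℂ) + a) ^ (j + 1)))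
      (Metric.ball 0 (‖w‖ + 1)) := fun n => by fun_prop
  have hb : ∀ (n : ℕ) (v : ℂ), v ∈ Metric.ball (0 : ℂ) (‖w‖ + 1) →
      ‖v ^ n / (n.factorial * ((n : ℂ) + a) ^ (j + 1))‖ ≤
        (‖w‖ + 1) ^ n / (n.factorial * ‖(n : ℂ) + a‖ ^ (j + 1)) := by
    intro n v hv
    rw [mem_ball_zero_iff] at hv
    rw [norm_Efun_term]
    gcongr
  have hmem : w ∈ Metric.ball (0 : ℂ) (‖w‖ + 1) := by simp
  have hs := Complex.hasSum_deriv_of_summable_norm hu hd Metric.isOpen_ball hb hmem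
  have hdiff : DifferentiableAt ℂ (Efun a (j + 1)) w :=
    (Complex.differentiableOn_tsum_of_summable_norm hu hd Metric.isOpen_ball hb).differentiableAt
      (Metric.isOpen_ball.mem_nhds hmem)
  have key : w * deriv (Efun a (j + 1)) w = Efun a j w - a * Efun a (j + 1) w := by
    refine (hs.mul_left w).unique ?_
    have hr := (hasSum_Efun a j w).sub ((hasSum_Efun a (j + 1) w).mul_left (a : ℂ))
    refine (congrArg (HasSum · _) (funext fun n => ?_)).mpr hr
    have hn := ha n
    have hf : (n.factorial : ℂ) ≠ 0 := by exact_mod_cast n.factorial_ne_zero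
    have hp : w * (n * w ^ (n - 1)) = n * w ^ n := by
      cases n with
      | zero => simp
      | succ k => rw [Nat.add_sub_cancel]; ring
    rw [deriv_div_const, deriv_pow_field, ← mul_div_assoc, hp]
    field_simp
    ring
  rw [← key, mul_div_cancel_left₀ _ hw]
  exact hdiff.hasDerivAt

theorem psi_eq (a : ℝ) (j : ℕ) (z : ℂ) : psi a j z = Complex.exp z * Efun a j (-z) := by
  cases j with
  | succ j => rfl
  | zero =>
    have h : Efun a 0 (-z) = Complex.exp (-z) := by
      simp only [Efun, pow_zero, mul_one]
      rw [Complex.exp_eq_exp_ℂ, NormedSpace.exp_eq_tsum_div]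
    rw [h, ← Complex.exp_add, add_neg_cancel, Complex.exp_zero]
    rfl

theorem stmt3 (a : ℝ) (ha : ¬ ∃ m : ℤ, m ≤ 0 ∧ a = (m : ℝ)) :
    (∀ j : ℕ, 1 ≤ j → ∀ z : ℂ, z ≠ 0 →
      HasDerivAt (psi a j)
        ((1 - (a : ℂ) / z) * psi a j z + (1 / z) * psi a (j - 1) z) z) ∧
    (∀ z : ℂ, z ≠ 0 →
      HasDerivAt (psi a 1) ((1 + (z - (a : ℂ)) * psi a 1 z) / z) z) := by
  have ha' : ∀ n : ℕ, (n : ℂ) + a ≠ 0 := by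
    intro n h
    refine ha ⟨-n, by simp, ?_⟩
    have h' : (n : ℝ) + a = 0 := by exact_mod_cast h
    push_cast
    linarith
  have main : ∀ j : ℕ, 1 ≤ j → ∀ z : ℂ, z ≠ 0 →
      HasDerivAt (psi a j)
        ((1 - (a : ℂ) / z) * psi a j z + (1 / z) * psi a (j - 1) z) z := by
    intro j hj z hz
    obtain ⟨k, rfl⟩ := Nat.exists_eq_add_of_le' hj
    have hE := (hasDerivAt_Efun a ha' k (-z) (neg_ne_zero.mpr hz)).comp z (hasDerivAt_neg z)
    rw [Nat.add_sub_cancel, psi_eq, psi_eq]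
    have hfun : psi a (k + 1) = fun z => Complex.exp z * Efun a (k + 1) (-z) := rfl
    rw [hfun]
    refine ((Complex.hasDerivAt_exp z).mul hE).congr_deriv ?_
    simp only [Function.comp_apply]
    field_simp
    ring
  refine ⟨main, fun z hz => ?_⟩
  refine (main 1 le_rfl z hz).congr_deriv ?_
  simp only [Nat.sub_self, show psi a 0 z = 1 from rfl]
  field_simp
  ring
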